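/- Let n ≥ 3 and let G be a simple graph on n vertices v₀,…,v_{n−1} arranged in a cyclic order, whose edge set contains all n boundary edges {vᵢ, v_{i+1 mod n}} together with a set C of chords (edges between non-consecutive vertices). If every chord in C is crossed by at most 5 other chords (two chords cross if and only if their endpoints interleave in the cyclic order), then |C| ≤ 3n − 9. In other words, a face of size |f| all of whose internal chords are crossed at most five times contains at most 3|f| − 9 chords. -/

import Mathlib

/-- `x` lies strictly between `a` and `b` in the cyclic order of `Fin n`
(going forward from `a` to `b` along the cycle). -/
def cycBtw (n : ℕ) (a b x : Fin n) : Prop :=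
  0 < (x.val + n - a.val) % n ∧ (x.val + n - a.val) % n < (b.val + n - a.val) % n

/-- Two edges `e` and `f` cross in the cyclic order determined by the positions `σ`:
they have four distinct endpoints and the endpoints interleave, i.e. exactly one
endpoint of `f` lies strictly between the endpoints of `e`. -/
def crossing (n : ℕ) (σ : Fin n → Fin n) (e f : Sym2 (Fin n)) : Prop :=
  ∃ a b c d : Fin n, e = s(a, b) ∧ f = s(c, d) ∧
    a ≠ b ∧ c ≠ d ∧ a ≠ c ∧ a ≠ d ∧ b ≠ c ∧ b ≠ d ∧
    (cycBtw n (σ a) (σ b) (σ c) ↔ ¬ cycBtw n (σ a) (σ b) (σ d))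

/-- With respect to the cyclic order given by positions `σ`, every edge of `G`
is crossed by at most `k` other edges. -/
def OuterKPlanarOrd (n k : ℕ) (σ : Fin n → Fin n) (G : SimpleGraph (Fin n)) : Prop :=
  ∀ e ∈ G.edgeSet, ({f ∈ G.edgeSet | crossing n σ e f}).ncard ≤ k

/-- `G` is outer `k`-planar: its vertices can be arranged in a cyclic order such
that every edge is crossed by at most `k` other edges. -/
def IsOuterKPlanar (n k : ℕ) (G : SimpleGraph (Fin n)) : Prop :=
  ∃ σ : Fin n ≃ Fin n, OuterKPlanarOrd n k (⇑σ) G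

/-- Two vertices are consecutive in the cyclic order of `Fin n`. -/
def cycConsecutive (n : ℕ) (a b : Fin n) : Prop :=
  b.val = (a.val + 1) % n ∨ a.val = (b.val + 1) % n

/-- An edge is a chord iff its endpoints are not consecutive in the cyclic order. -/
def IsChord (n : ℕ) (e : Sym2 (Fin n)) : Prop :=
  ∀ a b : Fin n, e = s(a, b) → ¬ cycConsecutive n a b

/-- Two pairs of positions `e.1 < e.2` and `f.1 < f.2` on a line interleave. -/
abbrev Interleave (e f : ℕ × ℕ) : Prop :=
  (e.1 < f.1 ∧ f.1 < e.2 ∧ e.2 < f.2) ∨ (f.1 < e.1 ∧ e.1 < f.2 ∧ f.2 < e.2)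

/-- `E` is the edge set of a convex drawing on the vertices `0, …, n - 1`, edges being written as
increasing pairs, such that every edge is crossed by at most five others. -/
structure IsFivePlanar (n : ℕ) (E : Finset (ℕ × ℕ)) : Prop where
  lt : ∀ e ∈ E, e.1 < e.2
  lt_size : ∀ e ∈ E, e.2 < n
  card_crossing_le : ∀ e ∈ E, (E.filter (Interleave e)).card ≤ 5

/-- Every five-planar convex drawing on `n` vertices has at most `4 * n - 9` edges. -/
def EdgeBound (n : ℕ) : Prop :=
  ∀ E : Finset (ℕ × ℕ), IsFivePlanar n E → E.card + 9 ≤ 4 * n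

section Transfer

variable {n n' : ℕ} {E F : Finset (ℕ × ℕ)} {f : ℕ → ℕ}

theorem Interleave.of_map (hf : Monotone f) {e e' : ℕ × ℕ}
    (h : Interleave (Prod.map f f e) (Prod.map f f e')) : Interleave e e' := by
  have key : ∀ a b, f a < f b → a < b := fun a b hab => hf.reflect_lt hab
  simp only [Interleave, Prod.map_fst, Prod.map_snd] at h ⊢
  rcases h with ⟨h1, h2, h3⟩ | ⟨h1, h2, h3⟩
  · exact Or.inl ⟨key _ _ h1, key _ _ h2, key _ _ h3⟩
  · exact Or.inr ⟨key _ _ h1, key _ _ h2, key _ _ h3⟩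

theorem card_crossing_image_le (hf : Monotone f) (e : ℕ × ℕ) :
    ((F.image (Prod.map f f)).filter (Interleave (Prod.map f f e))).card ≤
      (F.filter (Interleave e)).card := by
  rw [Finset.filter_image]
  refine Finset.card_image_le.trans (Finset.card_le_card fun a ha => ?_)
  rw [Finset.mem_filter] at ha ⊢
  exact ⟨ha.1, ha.2.of_map hf⟩

theorem IsFivePlanar.image (hE : IsFivePlanar n E) (hF : F ⊆ E) (hf : Monotone f)
    (hlt : ∀ e ∈ F, f e.1 < f e.2) (hn : ∀ e ∈ F, f e.2 < n') :
    IsFivePlanar n' (F.image (Prod.map f f)) := by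
  refine ⟨?_, ?_, ?_⟩ <;> simp only [Finset.forall_mem_image]
  · exact fun e he => hlt e he
  · exact fun e he => hn e he
  · exact fun e he => (card_crossing_image_le hf e).trans <|
      (Finset.card_le_card (Finset.filter_subset_filter _ hF)).trans
        (hE.card_crossing_le e (hF he))

theorem EdgeBound.card_le (hB : EdgeBound n') (hE : IsFivePlanar n E) (hF : F ⊆ E)
    (hf : Monotone f) (hlt : ∀ e ∈ F, f e.1 < f e.2) (hn : ∀ e ∈ F, f e.2 < n')
    (hinj : Set.InjOn (Prod.map f f) F) : F.card + 9 ≤ 4 * n' := by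
  rw [← Finset.card_image_of_injOn hinj]
  exact hB _ (hE.image hF hf hlt hn)

/-- As `EdgeBound.card_le`, but with room for one additional edge `g`, provided that every edge
crossed by `g` has lost one of its crossings. -/
theorem EdgeBound.card_lt (hB : EdgeBound n') (hE : IsFivePlanar n E) (hF : F ⊆ E)
    (hf : Monotone f) (hlt : ∀ e ∈ F, f e.1 < f e.2) (hn : ∀ e ∈ F, f e.2 < n')
    (hinj : Set.InjOn (Prod.map f f) F) (g : ℕ × ℕ) (hg : g.1 < g.2) (hgn : g.2 < n')
    (hgF : ∀ e ∈ F, Prod.map f f e ≠ g)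
    (hcross : (F.filter fun e => Interleave g (Prod.map f f e)).card ≤ 5)
    (hlost : ∀ e ∈ F, Interleave g (Prod.map f f e) → ∃ e' ∈ E, e' ∉ F ∧ Interleave e e') :
    F.card + 1 + 9 ≤ 4 * n' := by
  have hD := hE.image hF hf hlt hn
  have hgD : g ∉ F.image (Prod.map f f) := by
    simpa using fun a b hab => hgF (a, b) hab
  rw [← Finset.card_image_of_injOn hinj, ← Finset.card_insert_of_notMem hgD]
  refine hB _ ⟨?_, ?_, ?_⟩
  · exact (Finset.forall_mem_insert _ _ _).2 ⟨hg, hD.lt⟩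
  · exact (Finset.forall_mem_insert _ _ _).2 ⟨hgn, hD.lt_size⟩
  · refine (Finset.forall_mem_insert _ _ _).2 ⟨?_, ?_⟩
    · rw [Finset.filter_insert, if_neg (by simp only [Interleave]; omega), Finset.filter_image]
      exact Finset.card_image_le.trans hcross
    · intro d hd
      rw [Finset.filter_insert]
      split_ifs with hdg
      · obtain ⟨e, he, rfl⟩ := Finset.mem_image.1 hd
        obtain ⟨e', he', he'F, hee'⟩ := hlost e he hdg.symm
        refine (Finset.card_insert_le _ _).trans ?_
        have h1 := card_crossing_image_le (F := F) hf e
        have h2 : (F.filter (Interleave e)).card < (E.filter (Interleave e)).card :=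
          Finset.card_lt_card <| Finset.ssubset_iff_of_subset
            (Finset.filter_subset_filter _ hF) |>.2
            ⟨e', Finset.mem_filter.2 ⟨he', hee'⟩, fun h => he'F (Finset.mem_filter.1 h).1⟩
        have h3 := hE.card_crossing_le e (hF he)
        omega
      · exact hD.card_crossing_le d hd

end Transfer

section Reductions

variable {n : ℕ} {E : Finset (ℕ × ℕ)}

/-- The common neighbours of `i` and `j`. -/
def commonNeighbours (n : ℕ) (E : Finset (ℕ × ℕ)) (i j : ℕ) : Finset ℕ :=
  (Finset.range n).filter fun k => ((i, k) ∈ E ∨ (k, i) ∈ E) ∧ ((j, k) ∈ E ∨ (k, j) ∈ E)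

/-- Contracting the boundary edge `{i, i + 1}`. -/
theorem four_le_card_commonNeighbours (hE : IsFivePlanar n E) (hcard : 4 * n < E.card + 9)
    (hB : EdgeBound (n - 1)) {i : ℕ} (hi : i + 1 < n) :
    4 ≤ (commonNeighbours n E i (i + 1)).card := by
  by_contra! hW
  set W := commonNeighbours n E i (i + 1) with hWdef
  set R : Finset (ℕ × ℕ) := insert (i, i + 1)
    (W.image fun k => (min (i + 1) k, max (i + 1) k)) with hR
  have hRcard : R.card ≤ 4 :=
    (Finset.card_insert_le _ _).trans (Nat.succ_le_succ (Finset.card_image_le.trans (by omega)))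
  have hFcard := Finset.le_card_sdiff R E
  have hmem : ∀ e ∈ E \ R, e ∈ E ∧ e ≠ (i, i + 1) ∧
      ∀ k ∈ W, e ≠ (min (i + 1) k, max (i + 1) k) := by
    intro e he
    simp only [hR, Finset.mem_sdiff, Finset.mem_insert, Finset.mem_image, not_or, not_exists,
      not_and] at he
    exact ⟨he.1, he.2.1, fun k hk h => he.2.2 k hk h.symm⟩
  have hWmem : ∀ k, k ∈ W ↔ k < n ∧ ((i, k) ∈ E ∨ (k, i) ∈ E) ∧
      ((i + 1, k) ∈ E ∨ (k, i + 1) ∈ E) := by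
    simp [hWdef, commonNeighbours]
  have := hB.card_le (f := fun j => if j ≤ i then j else j - 1) hE
    (Finset.sdiff_subset (s := E) (t := R))
    (by intro a b hab; dsimp only; split_ifs <;> omega)
    (by
      rintro ⟨a, b⟩ he
      obtain ⟨h1, h2, -⟩ := hmem _ he
      have := hE.lt _ h1
      simp only [ne_eq, Prod.mk.injEq] at h2 this ⊢
      split_ifs <;> omega)
    (by
      rintro ⟨a, b⟩ he
      have := hE.lt_size _ (hmem _ he).1
      simp only at this ⊢
      split_ifs <;> omega)
    (by
      rintro ⟨a, b⟩ he ⟨c, d⟩ he' h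
      obtain ⟨h1, h2, h3⟩ := hmem _ he
      obtain ⟨h1', h2', h3'⟩ := hmem _ he'
      have l1 := hE.lt _ h1
      have l2 := hE.lt _ h1'
      have l3 := hE.lt_size _ h1
      have l4 := hE.lt_size _ h1'
      simp only [Prod.mk.injEq, Prod.map_apply] at h l1 l2 l3 l4 ⊢
      have key : ∀ x y, (if x ≤ i then x else x - 1) = (if y ≤ i then y else y - 1) →
          x = y ∨ (x = i ∧ y = i + 1) ∨ (x = i + 1 ∧ y = i) := by
        intro x y hxy
        split_ifs at hxy <;> omega
      have lower : ∀ k, k < n → i + 1 < k → (i, k) ∈ E → (i + 1, k) ∈ E \ R → False := by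
        intro k hk hik hE1 hE2
        refine (hmem _ hE2).2.2 k ((hWmem k).2 ⟨hk, Or.inl hE1, Or.inl (hmem _ hE2).1⟩) ?_
        rw [min_eq_left hik.le, max_eq_right hik.le]
      have upper : ∀ k, k < i → (k, i) ∈ E → (k, i + 1) ∈ E \ R → False := by
        intro k hik hE1 hE2
        refine (hmem _ hE2).2.2 k
          ((hWmem k).2 ⟨by omega, Or.inr hE1, Or.inr (hmem _ hE2).1⟩) ?_
        rw [min_eq_right (by omega), max_eq_left (by omega)]
      rcases key _ _ h.1 with rfl | ⟨rfl, rfl⟩ | ⟨rfl, rfl⟩ <;>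
        rcases key _ _ h.2 with rfl | ⟨hb, hd⟩ | ⟨hb, hd⟩ <;> try subst hb <;> try subst hd
      · exact ⟨rfl, rfl⟩
      · exact (upper _ l1 h1 he').elim
      · exact (upper _ l2 h1' he).elim
      · exact (lower _ l3 l2 h1 he').elim
      all_goals first | omega | exact (lower _ l3 l1 h1' he).elim)
  omega

/-- Splitting the drawing along the pair `{p, q}`. -/
theorem four_le_card_crossing_add (hE : IsFivePlanar n E) (hcard : 4 * n < E.card + 9)
    (hB : ∀ n', 3 ≤ n' → n' < n → EdgeBound n') {p q : ℕ} (hpq : p + 2 ≤ q) (hq : q < n)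
    (hne : q + 2 ≤ p + n) :
    4 ≤ (E.filter (Interleave (p, q))).card + (E.filter (· = (p, q))).card := by
  obtain ⟨I, hI⟩ : ∃ I, I = E.filter fun e => p ≤ e.1 ∧ e.2 ≤ q ∧ e ≠ (p, q) := ⟨_, rfl⟩
  obtain ⟨O, hO⟩ : ∃ O, O = E.filter fun e =>
      ((e.1 ≤ p ∨ q ≤ e.1) ∧ (e.2 ≤ p ∨ q ≤ e.2)) ∧ e ≠ (p, q) := ⟨_, rfl⟩
  have h1 := (hB (q - p + 1) (by omega) (by omega)).card_lt (f := fun j => j - p) hE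
    (F := I) (hI ▸ Finset.filter_subset _ E) (by intro a b hab; dsimp only; omega)
    (by
      rintro ⟨a, b⟩ he
      simp only [hI, Finset.mem_filter] at he
      have := hE.lt _ he.1
      simp only at this ⊢
      omega)
    (by
      rintro ⟨a, b⟩ he
      simp only [hI, Finset.mem_filter] at he
      simp only
      omega)
    (by
      rintro ⟨a, b⟩ he ⟨c, d⟩ he' h
      simp only [hI, Finset.coe_filter, Set.mem_ofPred_eq] at he he'
      have := hE.lt _ he.1
      have := hE.lt _ he'.1
      simp only [Prod.mk.injEq, Prod.map_apply] at *
      omega)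
    (0, q - p) (by simp only; omega) (by simp only; omega)
    (by
      rintro ⟨a, b⟩ he
      simp only [hI, Finset.mem_filter] at he
      have := hE.lt _ he.1
      simp only [ne_eq, Prod.mk.injEq, Prod.map_apply] at *
      omega)
    (by
      rw [Finset.filter_false_of_mem]
      · simp
      · rintro ⟨a, b⟩ he
        simp only [hI, Finset.mem_filter] at he
        simp only [Interleave, Prod.map_apply]
        omega)
    (by
      rintro ⟨a, b⟩ he h
      simp only [hI, Finset.mem_filter] at he
      simp only [Interleave, Prod.map_apply] at h
      omega)
  have h2 := (hB (n - (q - p - 1)) (by omega) (by omega)).card_lt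
    (f := fun j => if j ≤ p then j else if q ≤ j then j - (q - p - 1) else p + 1) hE
    (F := O) (hO ▸ Finset.filter_subset _ E)
    (by intro a b hab; dsimp only; split_ifs <;> omega)
    (by
      rintro ⟨a, b⟩ he
      simp only [hO, Finset.mem_filter] at he
      have := hE.lt _ he.1
      simp only at this ⊢
      split_ifs <;> omega)
    (by
      rintro ⟨a, b⟩ he
      simp only [hO, Finset.mem_filter] at he
      have := hE.lt_size _ he.1
      simp only at this ⊢
      split_ifs <;> omega)
    (by
      rintro ⟨a, b⟩ he ⟨c, d⟩ he' h
      simp only [hO, Finset.coe_filter, Set.mem_ofPred_eq] at he he'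
      have := hE.lt _ he.1
      have := hE.lt _ he'.1
      simp only [Prod.mk.injEq, Prod.map_apply] at *
      grind)
    (p, p + 1) (by simp only; omega) (by simp only; omega)
    (by
      rintro ⟨a, b⟩ he
      simp only [hO, Finset.mem_filter] at he
      have := hE.lt _ he.1
      simp only [ne_eq, Prod.mk.injEq, Prod.map_apply] at *
      grind)
    (by
      rw [Finset.filter_false_of_mem]
      · simp
      · rintro ⟨a, b⟩ he
        simp only [hO, Finset.mem_filter] at he
        simp only [Interleave, Prod.map_apply]
        omega)
    (by
      rintro ⟨a, b⟩ he h
      simp only [Interleave, Prod.map_apply] at h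
      omega)
  have h3 : E ⊆ I ∪ O ∪ E.filter (Interleave (p, q)) ∪ E.filter (· = (p, q)) := by
    rintro ⟨a, b⟩ he
    have := hE.lt _ he
    simp only [hI, hO, Finset.mem_union, Finset.mem_filter, he, true_and, Interleave, ne_eq,
      Prod.mk.injEq] at this ⊢
    omega
  have h4 := Finset.card_le_card h3
  have h5 := Finset.card_union_le (I ∪ O ∪ E.filter (Interleave (p, q))) (E.filter (· = (p, q)))
  have h6 := Finset.card_union_le (I ∪ O) (E.filter (Interleave (p, q)))
  have h7 := Finset.card_union_le I O
  omega

/-- Rotating the drawing by one step. -/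
theorem IsFivePlanar.exists_rotate (hE : IsFivePlanar n E) :
    ∃ E', IsFivePlanar n E' ∧ E'.card = E.card ∧
      ∀ i j, (i + 1, j + 1) ∈ E → (i, j) ∈ E' := by
  let r : ℕ × ℕ → ℕ × ℕ := fun e => if e.1 = 0 then (e.2 - 1, n - 1) else (e.1 - 1, e.2 - 1)
  have hr : ∀ e, r e = if e.1 = 0 then (e.2 - 1, n - 1) else (e.1 - 1, e.2 - 1) := fun _ => rfl
  have hinj : Set.InjOn r E := by
    rintro ⟨a, b⟩ he ⟨c, d⟩ he' h
    have h1 := hE.lt _ he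
    have h2 := hE.lt _ he'
    have h3 := hE.lt_size _ he
    have h4 := hE.lt_size _ he'
    simp only [hr, Prod.mk.injEq] at *
    grind
  refine ⟨E.image r, ⟨?_, ?_, ?_⟩, Finset.card_image_of_injOn hinj, ?_⟩
  · simp only [Finset.forall_mem_image]
    rintro ⟨a, b⟩ he
    have h1 := hE.lt _ he
    have h3 := hE.lt_size _ he
    simp only [hr] at *
    grind
  · simp only [Finset.forall_mem_image]
    rintro ⟨a, b⟩ he
    have h1 := hE.lt _ he
    have h3 := hE.lt_size _ he
    simp only [hr] at *
    grind
  · simp only [Finset.forall_mem_image]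
    intro e he
    rw [Finset.filter_image]
    refine (Finset.card_image_le.trans (Finset.card_le_card fun e' he' => ?_)).trans
      (hE.card_crossing_le e he)
    rw [Finset.mem_filter] at he' ⊢
    refine ⟨he'.1, ?_⟩
    have h1 := hE.lt _ he
    have h2 := hE.lt _ he'.1
    have h3 := hE.lt_size _ he
    have h4 := hE.lt_size _ he'.1
    have h5 := he'.2
    simp only [hr, Interleave] at h5 ⊢
    grind
  · intro i j h
    exact Finset.mem_image.2 ⟨_, h, by simp [hr]⟩

end Reductions

section LocalConfiguration

variable {n u w : ℕ} {E : Finset (ℕ × ℕ)}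

theorem IsFivePlanar.card_crossing_sdiff_le (hE : IsFivePlanar n E) {e a b c : ℕ × ℕ} (he : e ∈ E)
    (ha : a ∈ E ∧ Interleave e a) (hb : b ∈ E ∧ Interleave e b) (hc : c ∈ E ∧ Interleave e c)
    (hab : a ≠ b) (hac : a ≠ c) (hbc : b ≠ c) :
    (E.filter (Interleave e) \ {a, b, c}).card ≤ 2 := by
  have h1 := hE.card_crossing_le e he
  have h2 : ({a, b, c} : Finset (ℕ × ℕ)) ⊆ E.filter (Interleave e) := by
    simp [Finset.insert_subset_iff, ha, hb, hc]
  rw [Finset.card_sdiff_of_subset h2, Finset.card_eq_three.2 ⟨a, b, c, hab, hac, hbc, rfl⟩]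
  omega

/-- The vertices `0, 1, 2, 3` span a complete graph apart from its boundary edges, the chord `{0, 3}`
cuts off `1` and `2`, and `1` and `2` have the common neighbours `u < w` beyond it. -/
structure HasQuadrilateral (E : Finset (ℕ × ℕ)) (u w : ℕ) : Prop where
  mem_zero_two : (0, 2) ∈ E
  mem_zero_three : (0, 3) ∈ E
  mem_one_three : (1, 3) ∈ E
  mem_one_left : (1, u) ∈ E
  mem_one_right : (1, w) ∈ E
  mem_two_left : (2, u) ∈ E
  mem_two_right : (2, w) ∈ E

theorem HasQuadrilateral.card_crossing_left_le (h : HasQuadrilateral E u w)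
    (hE : IsFivePlanar n E) (hu : 3 < u) (huw : u < w) :
    (E.filter (Interleave (1, u)) \ {(0, 2), (0, 3), (2, w)}).card ≤ 2 :=
  hE.card_crossing_sdiff_le h.mem_one_left ⟨h.mem_zero_two, by simp only [Interleave]; omega⟩
    ⟨h.mem_zero_three, by simp only [Interleave]; omega⟩
    ⟨h.mem_two_right, by simp only [Interleave]; omega⟩ (by simp) (by simp) (by simp)

theorem HasQuadrilateral.card_crossing_right_le (h : HasQuadrilateral E u w)
    (hE : IsFivePlanar n E) (hu : 3 < u) (huw : u < w) :
    (E.filter (Interleave (2, w)) \ {(0, 3), (1, 3), (1, u)}).card ≤ 2 :=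
  hE.card_crossing_sdiff_le h.mem_two_right ⟨h.mem_zero_three, by simp only [Interleave]; omega⟩
    ⟨h.mem_one_three, by simp only [Interleave]; omega⟩
    ⟨h.mem_one_left, by simp only [Interleave]; omega⟩ (by simp) (by simp)
    (by simp only [ne_eq, Prod.mk.injEq]; omega)

theorem HasQuadrilateral.card_other_le (h : HasQuadrilateral E u w)
    (hE : IsFivePlanar n E) (hu : 3 < u) (huw : u < w) :
    (E.filter fun e => (e.1 = 1 ∨ e.1 = 2) ∧ 3 < e.2 ∧ e.2 ≠ u ∧ e.2 ≠ w).card ≤ 1 := by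
  have h1 := hE.card_crossing_le _ h.mem_zero_three
  have h2 : ({(1, u), (1, w), (2, u), (2, w)} : Finset (ℕ × ℕ)).card = 4 := by
    rw [Finset.card_insert_of_notMem, Finset.card_insert_of_notMem,
      Finset.card_insert_of_notMem, Finset.card_singleton] <;> simp <;> omega
  have h3 : ({(1, u), (1, w), (2, u), (2, w)} : Finset (ℕ × ℕ)) ⊆
      E.filter (Interleave (0, 3)) := by
    simp [Finset.insert_subset_iff, Interleave, h.mem_one_left, h.mem_one_right,
      h.mem_two_left, h.mem_two_right]
    omega
  have h4 := Finset.card_sdiff_of_subset h3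
  refine (Finset.card_le_card (t := E.filter (Interleave (0, 3)) \ _) ?_).trans
    (h4.le.trans (by omega))
  rintro ⟨a, b⟩ he
  rw [Finset.mem_filter] at he
  simp [Interleave, he.1]
  omega

theorem HasQuadrilateral.false_of_adjacent (h : HasQuadrilateral E 4 (n - 1))
    (hE : IsFivePlanar n E) (hcard : 4 * n < E.card + 9) (hn : 7 ≤ n)
    (hB : EdgeBound (n - 4)) : False := by
  have h1 := h.card_crossing_left_le hE (by omega) (by omega)
  have h2 := h.card_crossing_right_le hE (by omega) (by omega)
  obtain ⟨A, hA⟩ : ∃ A, A = E.filter (Interleave (1, 4)) \ {(0, 2), (0, 3), (2, n - 1)} :=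
    ⟨_, rfl⟩
  obtain ⟨B, hB'⟩ : ∃ B, B = E.filter (Interleave (2, n - 1)) \ {(0, 3), (1, 3), (1, 4)} :=
    ⟨_, rfl⟩
  rw [← hA] at h1
  rw [← hB'] at h2
  obtain ⟨S, hS⟩ : ∃ S, S = List.toFinset [(0, 1), (0, 2), (0, 3), (0, n - 1), (1, 2), (1, 3),
    (1, 4), (1, n - 1), (2, 3), (2, 4), (2, n - 1), (3, 4)] := ⟨_, rfl⟩
  have h3 : S.card ≤ 12 := hS ▸ List.toFinset_card_le _
  have h4 : (S ∪ A ∪ B).card ≤ 16 := by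
    have := Finset.card_union_le (S ∪ A) B
    have := Finset.card_union_le S A
    omega
  have h5 := Finset.le_card_sdiff (S ∪ A ∪ B) E
  have h6 : ∀ e ∈ E \ (S ∪ A ∪ B), e ∈ E ∧ 4 ≤ e.1 := by
    rintro ⟨a, b⟩ he
    rw [Finset.mem_sdiff] at he
    refine ⟨he.1, ?_⟩
    have l1 := hE.lt _ he.1
    have l2 := hE.lt_size _ he.1
    by_contra! hlt
    apply he.2
    simp only [hS, hA, hB', he.1, Interleave, Finset.mem_union, List.mem_toFinset, List.mem_cons,
      List.not_mem_nil, Finset.mem_sdiff, Finset.mem_filter, Finset.mem_insert,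
      Finset.mem_singleton, Prod.mk.injEq, true_and] at l1 l2 hlt ⊢
    interval_cases a <;> simp <;> omega
  have h7 := hB.card_le (f := fun j => j - 4) hE Finset.sdiff_subset
    (by intro a b hab; dsimp only; omega)
    (fun e he => by have := h6 e he; have := hE.lt e this.1; omega)
    (fun e he => by
      have := h6 e he; have := hE.lt e this.1; have := hE.lt_size e (h6 e he).1
      omega)
    (by
      rintro ⟨a, b⟩ he ⟨c, d⟩ he' heq
      have := h6 _ he; have := hE.lt _ this.1
      have := h6 _ he'; have := hE.lt _ this.1
      simp only [Prod.map_apply, Prod.mk.injEq] at *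
      omega)
  omega

theorem mem_commonNeighbours {i j k : ℕ} : k ∈ commonNeighbours n E i j ↔
    k < n ∧ ((i, k) ∈ E ∨ (k, i) ∈ E) ∧ ((j, k) ∈ E ∨ (k, j) ∈ E) := by
  simp [commonNeighbours]

set_option maxHeartbeats 1000000 in
theorem HasQuadrilateral.false_of_lt_pred (h : HasQuadrilateral E u w)
    (hE : IsFivePlanar n E) (hcard : 4 * n < E.card + 9) (hn : 7 ≤ n)
    (hB : ∀ n', 3 ≤ n' → n' < n → EdgeBound n') (hu : 3 < u) (huw : u < w) (hw : w + 1 < n) :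
    False := by
  have hl := h.card_crossing_left_le hE hu huw
  have hr := h.card_crossing_right_le hE hu huw
  have ho := h.card_other_le hE hu huw
  obtain ⟨e02, e03, e13, e1u, e1w, e2u, e2w⟩ := h
  have hK : ∀ i, i + 1 < n → 4 ≤ (commonNeighbours n E i (i + 1)).card := fun i hi =>
    four_le_card_commonNeighbours hE hcard (hB _ (by omega) (by omega)) hi
  have hlt : ∀ a b, (a, b) ∈ E → a < b ∧ b < n := fun a b hab =>
    ⟨hE.lt _ hab, hE.lt_size _ hab⟩
  have hsingle : ∀ e, (E.filter (· = e)).card ≤ 1 := fun e =>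
    Finset.card_le_one.2 (by simp +contextual)
  -- Splitting along `{0, w}` shows that the crossing bounds above are attained.
  obtain ⟨X, hX⟩ : ∃ X, X = E.filter fun e => 3 ≤ e.1 ∧ e.1 < w ∧ w < e.2 := ⟨_, rfl⟩
  obtain ⟨Y, hY⟩ : ∃ Y, Y = E.filter fun e => e.1 = 0 ∧ 3 < e.2 ∧ e.2 < w := ⟨_, rfl⟩
  obtain ⟨Z, hZ⟩ : ∃ Z, Z = E.filter fun e => (e.1 = 1 ∨ e.1 = 2) ∧ w < e.2 := ⟨_, rfl⟩
  have hXY : X.card + Y.card ≤ 2 := by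
    rw [← Finset.card_union_of_disjoint]
    · refine (Finset.card_le_card ?_).trans hr
      rintro ⟨a, b⟩ he
      simp only [hX, hY, ← Finset.filter_or, Finset.mem_filter] at he
      simp [Interleave, he.1]
      omega
    · rw [Finset.disjoint_left]
      rintro ⟨a, b⟩ he
      simp [hX, hY] at he ⊢
      omega
  have hZ1 : Z.card ≤ 1 := by
    refine (Finset.card_le_card ?_).trans ho
    rintro ⟨a, b⟩ he
    rw [hZ, Finset.mem_filter] at he
    rw [Finset.mem_filter]
    refine ⟨he.1, ?_⟩
    omega
  have hXZ : (E.filter (Interleave (0, w))).card ≤ X.card + Z.card := by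
    refine (Finset.card_le_card ?_).trans (Finset.card_union_le X Z)
    rintro ⟨a, b⟩ he
    rw [Finset.mem_filter] at he
    simp only [Interleave] at he
    simp only [hX, hZ, Finset.mem_union, Finset.mem_filter, he.1, true_and]
    omega
  have hs := four_le_card_crossing_add hE hcard hB (p := 0) (q := w) (by omega) (by omega)
    (by omega)
  have hsw := hsingle (0, w)
  have hX2 : X.card = 2 := by omega
  have hY0 : ∀ j, 3 < j → j < w → (0, j) ∉ E := by
    intro j hj hjw hmem
    have h1 : (0, j) ∈ Y := by simp [hY, hj, hjw, hmem]
    have := Finset.card_pos.2 ⟨_, h1⟩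
    omega
  obtain ⟨⟨c, z⟩, hcz⟩ : Z.Nonempty := Finset.card_pos.1 (by omega)
  simp only [hZ, Finset.mem_filter] at hcz
  have hother : ∀ a b, (a, b) ∈ E → a = 1 ∨ a = 2 → 3 < b → b ≠ u → b ≠ w → a = c ∧ b = z := by
    intro a b hab ha hb hbu hbw
    have := Finset.card_le_one.1 ho (a, b) (by simp [hab, ha, hb, hbu, hbw]) (c, z)
      (by simp only [Finset.mem_filter]; refine ⟨hcz.1, hcz.2.1, ?_, ?_, ?_⟩ <;> omega)
    simpa using this
  have hzn := (hlt _ _ hcz.1).2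
  -- Splitting along `{3, u}` shows that these are consecutive.
  obtain rfl : u = 4 := by
    by_contra hne
    have h1 := four_le_card_crossing_add hE hcard hB (p := 3) (q := u) (by omega) (by omega)
      (by omega)
    have h2 : (E.filter (Interleave (3, u))).card ≤ 2 := by
      refine (Finset.card_le_card ?_).trans hl
      rintro ⟨a, b⟩ he
      simp only [Finset.mem_filter] at he
      obtain ⟨he, hcr⟩ := he
      have h3 := hother a b he
      have h4 : ¬ (a = 0 ∧ 3 < b ∧ b < w) := fun ⟨h5, h6, h7⟩ => hY0 b h6 h7 (h5 ▸ he)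
      simp [Interleave, he] at hcr ⊢
      omega
    have := hsingle (3, u)
    omega
  -- The neighbours of `1` and `2`.
  have hN1 : ∀ k, (1, k) ∈ E → k = 2 ∨ k = 3 ∨ k = 4 ∨ k = w ∨ (c = 1 ∧ k = z) := by
    intro k hk
    have := hlt _ _ hk
    have := hother 1 k hk
    omega
  have hN2 : ∀ k, (2, k) ∈ E → k = 3 ∨ k = 4 ∨ k = w ∨ (c = 2 ∧ k = z) := by
    intro k hk
    have := hlt _ _ hk
    have := hother 2 k hk
    omega
  obtain rfl : c = 1 := by
    by_contra hne
    have h1 := hK 0 (by omega)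
    have h2 : commonNeighbours n E 0 (0 + 1) ⊆ {2, 3, w} := by
      intro k hk
      simp only [mem_commonNeighbours, zero_add] at hk
      have h3 := hN1 k
      have h4 := hlt k 0
      have h5 := hlt k 1
      have h6 := hlt 0 k
      have h7 := hY0 4 (by omega) (by omega)
      simp only [Finset.mem_insert, Finset.mem_singleton]
      grind
    have := (Finset.card_le_card h2).trans Finset.card_le_three
    omega
  obtain ⟨e3w, e34⟩ : (3, w) ∈ E ∧ (3, 4) ∈ E := by
    have h1 : commonNeighbours n E 2 (2 + 1) ⊆ {0, 1, 4, w} := by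
      intro k hk
      simp only [mem_commonNeighbours, Nat.reduceAdd] at hk
      have h3 := hN2 k
      have h4 := hlt k 2
      have h5 := hlt 3 k
      simp only [Finset.mem_insert, Finset.mem_singleton]
      grind
    have h2 := Finset.eq_of_subset_of_card_le h1 (Finset.card_le_four.trans (hK 2 (by omega)))
    have h3 : w ∈ commonNeighbours n E 2 (2 + 1) := by simp [h2]
    have h4 : 4 ∈ commonNeighbours n E 2 (2 + 1) := by simp [h2]
    simp only [mem_commonNeighbours, Nat.reduceAdd] at h3 h4
    have h5 := hlt w 3
    have h6 := hlt 4 3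
    grind
  -- The neighbours of `3` beyond `4` are `w` and some `x`, both adjacent to `4`.
  obtain ⟨J, hJ⟩ : ∃ J, J = (Finset.range n).filter fun j => 4 < j ∧ (3, j) ∈ E := ⟨_, rfl⟩
  have hJ2 : J.card ≤ 2 := by
    rw [← Finset.card_image_of_injective J (Prod.mk_right_injective 3)]
    refine (Finset.card_le_card ?_).trans hl
    simp only [Finset.image_subset_iff]
    intro j hj
    simp [hJ, Interleave] at hj ⊢
    exact ⟨hj.2.2, hj.2.1⟩
  have hJ4 : J ⊆ commonNeighbours n E 3 (3 + 1) ∧ J.card = 2 := by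
    have h1 : commonNeighbours n E 3 (3 + 1) ⊆
        {1, 2} ∪ J.filter (· ∈ commonNeighbours n E 3 (3 + 1)) := by
      intro k hk
      simp only [Finset.mem_union, Finset.mem_filter, hk, and_true]
      simp only [mem_commonNeighbours, Nat.reduceAdd] at hk
      have h3 := hlt 4 k
      have h4 := hlt k 3
      have h5 := hlt 3 k
      have h6 := hlt k 4
      have h7 := hY0 4 (by omega) (by omega)
      simp only [Finset.mem_insert, Finset.mem_singleton, hJ, Finset.mem_filter, Finset.mem_range]
      grind
    have h2 := (hK 3 (by omega)).trans
      ((Finset.card_le_card h1).trans (Finset.card_union_le _ _))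
    have h3 : ({1, 2} : Finset ℕ).card ≤ 2 := Finset.card_le_two
    have h4 := Finset.card_filter_le J (· ∈ commonNeighbours n E 3 (3 + 1))
    have h5 : J.card ≤ (J.filter (· ∈ commonNeighbours n E 3 (3 + 1))).card := by omega
    exact ⟨Finset.filter_eq_self.1
      (Finset.eq_of_subset_of_card_le (Finset.filter_subset _ _) h5), by omega⟩
  have hwJ : w ∈ J := by simp [hJ, e3w]; omega
  obtain ⟨x, hxw, hJx⟩ : ∃ x, x ≠ w ∧ ∀ j, j ∈ J ↔ j = w ∨ j = x := by
    obtain ⟨p, q, hpq, rfl⟩ := Finset.card_eq_two.1 hJ4.2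
    simp only [Finset.mem_insert, Finset.mem_singleton] at hwJ ⊢
    rcases hwJ with rfl | rfl
    · exact ⟨q, hpq.symm, fun j => Iff.rfl⟩
    · exact ⟨p, hpq, fun j => or_comm⟩
  have hJE : ∀ j ∈ J, 4 < j ∧ j < n ∧ (3, j) ∈ E ∧ (4, j) ∈ E := by
    intro j hj
    have h1 := hJ4.1 hj
    simp only [mem_commonNeighbours, Nat.reduceAdd] at h1
    simp only [hJ, Finset.mem_filter, Finset.mem_range] at hj
    have := hlt j 4
    grind
  have e4w := (hJE w hwJ).2.2.2
  obtain ⟨hx4, hxn, e3x, e4x⟩ := hJE x ((hJx x).2 (Or.inr rfl))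
  have hN3 : ∀ k, (3, k) ∈ E → k = 4 ∨ k = w ∨ k = x := by
    intro k hk
    have h1 := hlt _ _ hk
    have h2 := hJx k
    simp only [hJ, Finset.mem_filter, Finset.mem_range, hk, and_true] at h2
    omega
  by_cases hxz : x = z
  · subst hxz
    have hXeq : ∀ a b, (a, b) ∈ E → 3 ≤ a → a < w → w < b → (a = 3 ∨ a = 4) ∧ b = x := by
      intro a b hab h1 h2 h3
      have h4 : ({(3, x), (4, x)} : Finset (ℕ × ℕ)) ⊆ X := by
        simp [Finset.insert_subset_iff, hX, e3x, e4x]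
        omega
      have h5 := Finset.eq_of_subset_of_card_le h4 (by simp [hX2])
      have h6 : (a, b) ∈ X := by simp [*]
      simp [← h5] at h6
      omega
    obtain rfl : w = 5 := by
      by_contra hne
      have h1 := four_le_card_crossing_add hE hcard hB (p := 4) (q := w) (by omega) (by omega)
        (by omega)
      have h2 : E.filter (Interleave (4, w)) = ∅ := by
        rw [Finset.filter_eq_empty_iff]
        rintro ⟨a, b⟩ he hcr
        have h3 := hXeq a b he
        have h4 : a = 0 → ¬ (3 < b ∧ b < w) := fun h5 h6 => hY0 b h6.1 h6.2 (h5 ▸ he)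
        have h5 : a = 1 → _ := fun h => hN1 b (h ▸ he)
        have h6 : a = 2 → _ := fun h => hN2 b (h ▸ he)
        have h7 : a = 3 → _ := fun h => hN3 b (h ▸ he)
        simp only [Interleave] at hcr
        omega
      have := hsingle (4, w)
      simp only [h2, Finset.card_empty] at h1
      omega
    obtain ⟨S, hS⟩ : ∃ S, S = List.toFinset [(0, 1), (0, 2), (0, 3), (1, 2), (1, 3), (1, 4),
      (1, 5), (1, x), (2, 3), (2, 4), (2, 5), (3, 4), (3, 5), (3, x), (4, 5), (4, x)] := ⟨_, rfl⟩
    have hS16 : S.card ≤ 16 := by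
      exact hS ▸ List.toFinset_card_le _
    have h5 := Finset.le_card_sdiff S E
    have h6 : ∀ a b, (a, b) ∈ E \ S → a < b ∧ b < n ∧ 5 ≤ b ∧ (a = 0 ∨ 5 ≤ a) := by
      intro a b he
      rw [Finset.mem_sdiff] at he
      obtain ⟨l1, l2⟩ := hlt _ _ he.1
      have h5 := he.2
      simp only [hS, List.mem_toFinset, List.mem_cons, List.not_mem_nil, Prod.mk.injEq,
        or_false] at h5
      obtain h | h | h | h | h | h :
        a = 0 ∨ a = 1 ∨ a = 2 ∨ a = 3 ∨ a = 4 ∨ 5 ≤ a := by omega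
      · have h0 : b ≠ 4 := fun h6 => hY0 4 (by omega) (by omega) (h ▸ h6 ▸ he.1)
        simp [h] at h5
        omega
      · have := hN1 b (h ▸ he.1)
        simp [h] at h5
        omega
      · have := hN2 b (h ▸ he.1)
        simp [h] at h5
        omega
      · have := hN3 b (h ▸ he.1)
        simp [h] at h5
        omega
      · have := hXeq a b he.1
        simp [h] at h5
        omega
      · omega
    have h7 := (hB (n - 4) (by omega) (by omega)).card_le (f := fun j => j - 4) hE
      (Finset.sdiff_subset (s := E) (t := S))
      (by intro a b hab; dsimp only; omega)
      (by rintro ⟨a, b⟩ he; have := h6 a b he; dsimp only; omega)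
      (by rintro ⟨a, b⟩ he; have := h6 a b he; dsimp only; omega)
      (by
        rintro ⟨a, b⟩ he ⟨c, d⟩ he' heq
        have := h6 _ _ he
        have := h6 _ _ he'
        simp only [Prod.map_apply, Prod.mk.injEq] at *
        omega)
    omega
  · obtain ⟨S, hS⟩ : ∃ S, S = List.toFinset [(0, 2), (0, 3), (1, 2), (1, 3), (2, 3), (2, 4),
      (2, w), (3, 4), (3, w)] := ⟨_, rfl⟩
    have hS9 : S.card ≤ 9 := by
      exact hS ▸ List.toFinset_card_le _
    have h5 := Finset.le_card_sdiff S E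
    have h6 : ∀ a b, (a, b) ∈ E \ S → a < b ∧ b < n ∧
        ((a = 0 ∧ b ≠ 2 ∧ b ≠ 3 ∧ b ≠ 4) ∨ (a = 1 ∧ (b = 4 ∨ b = w ∨ b = z)) ∨
          (a = 3 ∧ b = x) ∨ 4 ≤ a) := by
      intro a b he
      rw [Finset.mem_sdiff] at he
      obtain ⟨l1, l2⟩ := hlt _ _ he.1
      have h5 := he.2
      simp only [hS, List.mem_toFinset, List.mem_cons, List.not_mem_nil, Prod.mk.injEq,
        or_false] at h5
      obtain h | h | h | h | h : a = 0 ∨ a = 1 ∨ a = 2 ∨ a = 3 ∨ 4 ≤ a := by omega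
      · have h0 : b ≠ 4 := fun h6 => hY0 4 (by omega) (by omega) (h ▸ h6 ▸ he.1)
        simp [h] at h5
        omega
      · have := hN1 b (h ▸ he.1)
        simp [h] at h5
        omega
      · have := hN2 b (h ▸ he.1)
        simp [h] at h5
        omega
      · have := hN3 b (h ▸ he.1)
        simp [h] at h5
        omega
      · omega
    have h7 := (hB (n - 2) (by omega) (by omega)).card_lt
      (f := fun j => if j ≤ 1 then j else if j ≤ 3 then 1 else j - 2) hE
      (Finset.sdiff_subset (s := E) (t := S))
      (by intro a b hab; dsimp only; split_ifs <;> omega)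
      (by rintro ⟨a, b⟩ he; have := h6 a b he; dsimp only; split_ifs <;> omega)
      (by rintro ⟨a, b⟩ he; have := h6 a b he; dsimp only; split_ifs <;> omega)
      (by
        rintro ⟨a, b⟩ he ⟨c, d⟩ he' heq
        have := h6 _ _ he
        have := h6 _ _ he'
        simp only [Prod.map_apply, Prod.mk.injEq] at heq ⊢
        obtain ⟨h8, h9⟩ := heq
        split_ifs at h8 <;> split_ifs at h9 <;> omega)
      (0, 2) (by simp) (by simp only; omega)
      (by
        rintro ⟨a, b⟩ he heq
        have := h6 _ _ he
        simp only [Prod.map_apply, Prod.mk.injEq] at heq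
        obtain ⟨h8, h9⟩ := heq
        split_ifs at h8 <;> split_ifs at h9 <;> omega)
      (by
        refine (Finset.card_le_card (t := {(1, w), (1, z), (3, x)}) ?_).trans
          (Finset.card_le_three.trans (by omega))
        rintro ⟨a, b⟩ he
        rw [Finset.mem_filter] at he
        have := h6 _ _ he.1
        have h8 := he.2
        simp only [Interleave, Prod.map_apply, Finset.mem_insert, Finset.mem_singleton,
          Prod.mk.injEq] at h8 ⊢
        split_ifs at h8 <;> omega)
      (by
        rintro ⟨a, b⟩ he hcr
        have := h6 _ _ he
        have h8 : a = 1 ∧ 4 < b ∨ a = 3 ∧ b = x := by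
          simp only [Interleave, Prod.map_apply] at hcr
          split_ifs at hcr <;> omega
        rcases h8 with ⟨rfl, h8⟩ | ⟨rfl, rfl⟩
        · exact ⟨_, e02, by simp [hS], by simp only [Interleave]; omega⟩
        · exact ⟨_, e2u, by simp [hS], by simp only [Interleave]; omega⟩)
    omega

end LocalConfiguration

section Bound

variable {n : ℕ} {E : Finset (ℕ × ℕ)}

/-- Reflecting the drawing in an axis that exchanges `0` with `3` and `1` with `2`. -/
theorem IsFivePlanar.exists_reflect (hE : IsFivePlanar n E) (hn : 3 < n) :
    ∃ E', IsFivePlanar n E' ∧ E'.card = E.card ∧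
      (∀ i j, j ≤ 3 → (i, j) ∈ E → (3 - j, 3 - i) ∈ E') ∧
      ∀ i j, i ≤ 3 → 3 < j → (i, j) ∈ E → (3 - i, n + 3 - j) ∈ E' := by
  let r : ℕ × ℕ → ℕ × ℕ := fun e =>
    if e.2 ≤ 3 then (3 - e.2, 3 - e.1)
    else if e.1 ≤ 3 then (3 - e.1, n + 3 - e.2) else (n + 3 - e.2, n + 3 - e.1)
  have hr : ∀ a b, r (a, b) = if b ≤ 3 then (3 - b, 3 - a)
    else if a ≤ 3 then (3 - a, n + 3 - b) else (n + 3 - b, n + 3 - a) := fun _ _ => rfl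
  have hinj : Set.InjOn r E := by
    rintro ⟨a, b⟩ he ⟨c, d⟩ he' h
    have h1 := hE.lt _ he
    have h2 := hE.lt _ he'
    have h3 := hE.lt_size _ he
    have h4 := hE.lt_size _ he'
    simp only [hr] at h h1 h2 h3 h4
    rw [Prod.mk.injEq]
    split_ifs at h <;> rw [Prod.mk.injEq] at h <;> omega
  have hval : ∀ a b, (a, b) ∈ E → (r (a, b)).1 < (r (a, b)).2 ∧ (r (a, b)).2 < n := by
    intro a b he
    have h1 := hE.lt _ he
    have h3 := hE.lt_size _ he
    simp only [hr] at h1 h3 ⊢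
    split_ifs <;> dsimp only <;> omega
  refine ⟨E.image r, ⟨?_, ?_, ?_⟩, Finset.card_image_of_injOn hinj, ?_, ?_⟩
  · simp only [Finset.forall_mem_image]
    exact fun e he => (hval _ _ he).1
  · simp only [Finset.forall_mem_image]
    exact fun e he => (hval _ _ he).2
  · simp only [Finset.forall_mem_image]
    rintro ⟨a, b⟩ he
    rw [Finset.filter_image]
    refine (Finset.card_image_le.trans (Finset.card_le_card ?_)).trans
      (hE.card_crossing_le _ he)
    rintro ⟨c, d⟩ he'
    rw [Finset.mem_filter] at he' ⊢
    refine ⟨he'.1, ?_⟩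
    have h1 := hE.lt _ he
    have h2 := hE.lt _ he'.1
    have h3 := hE.lt_size _ he
    have h4 := hE.lt_size _ he'.1
    have h5 := he'.2
    simp only [hr, Interleave] at h1 h2 h3 h4 h5 ⊢
    split_ifs at h5 <;> dsimp only at h5 <;> omega
  · intro i j hj h
    exact Finset.mem_image.2 ⟨_, h, by simp [hr, hj]⟩
  · intro i j hi hj h
    exact Finset.mem_image.2 ⟨_, h, by simp [hr, hi, hj]⟩

theorem IsFivePlanar.exists_mem_zero (hE : IsFivePlanar n E) {i j : ℕ} (h : (i, j) ∈ E) :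
    ∃ E', IsFivePlanar n E' ∧ E'.card = E.card ∧ (0, j - i) ∈ E' := by
  induction i generalizing j E with
  | zero => exact ⟨E, hE, rfl, h⟩
  | succ i ih =>
    obtain ⟨j, rfl⟩ : ∃ k, j = k + 1 := ⟨j - 1, by have := hE.lt _ h; simp only at this; omega⟩
    obtain ⟨E₁, h1, h2, h3⟩ := hE.exists_rotate
    obtain ⟨E₂, h4, h5, h6⟩ := ih h1 (h3 i j h)
    exact ⟨E₂, h4, h5.trans h2, by rwa [Nat.add_sub_add_right]⟩

theorem HasQuadrilateral.false {u w : ℕ} (h : HasQuadrilateral E u w)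
    (hE : IsFivePlanar n E) (hcard : 4 * n < E.card + 9) (hn : 7 ≤ n)
    (hB : ∀ n', 3 ≤ n' → n' < n → EdgeBound n') (hu : 3 < u) (huw : u < w) : False := by
  have hw := hE.lt_size _ h.mem_one_right
  simp only at hw
  rcases Nat.lt_or_ge (w + 1) n with hw' | hw'
  · exact h.false_of_lt_pred hE hcard hn hB hu huw hw'
  obtain rfl : w = n - 1 := by omega
  rcases Nat.lt_or_ge 4 u with hu' | hu'
  · obtain ⟨E', hE', hc, h1, h2⟩ := hE.exists_reflect (by omega)
    have hq : HasQuadrilateral E' (n + 3 - (n - 1)) (n + 3 - u) :=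
      ⟨h1 1 3 le_rfl h.mem_one_three, h1 0 3 le_rfl h.mem_zero_three,
        h1 0 2 (by omega) h.mem_zero_two, h2 2 _ (by omega) (by omega) h.mem_two_right,
        h2 2 _ (by omega) (by omega) h.mem_two_left, h2 1 _ (by omega) (by omega) h.mem_one_right,
        h2 1 _ (by omega) (by omega) h.mem_one_left⟩
    exact hq.false_of_lt_pred hE' (hc ▸ hcard) hn hB (by omega) (by omega) (by omega)
  · obtain rfl : u = 4 := by omega
    exact h.false_of_adjacent hE hcard hn (hB _ (by omega) (by omega))

/-- An edge `{0, m}` cutting off as few vertices as possible, but at least two. -/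
theorem IsFivePlanar.false_of_shortest (hE : IsFivePlanar n E) (hcard : 4 * n < E.card + 9)
    (hn : 7 ≤ n) (hB : ∀ n', 3 ≤ n' → n' < n → EdgeBound n') {m : ℕ} (hm : 3 ≤ m)
    (hmn : m + 3 ≤ n) (hmem : (0, m) ∈ E)
    (hshort : ∀ i j, (i, j) ∈ E → i + 3 ≤ j → j ≤ m → j = i + m) : False := by
  have hlt : ∀ a b, (a, b) ∈ E → a < b ∧ b < n := fun a b hab =>
    ⟨hE.lt _ hab, hE.lt_size _ hab⟩
  let W : ℕ → Finset ℕ := fun i =>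
    (Finset.range n).filter fun k => m < k ∧ (i, k) ∈ E ∧ (i + 1, k) ∈ E
  have hWmem : ∀ i k, k ∈ W i ↔ k < n ∧ m < k ∧ (i, k) ∈ E ∧ (i + 1, k) ∈ E := by simp [W]
  have hK : ∀ i, i + 1 < n → 4 ≤ (commonNeighbours n E i (i + 1)).card := fun i hi =>
    four_le_card_commonNeighbours hE hcard (hB _ (by omega) (by omega)) hi
  have hsub : ∀ i, 1 ≤ i → i + 1 < m →
      commonNeighbours n E i (i + 1) ⊆ {i - 1, i + 2} ∪ W i := by
    intro i hi him k hk
    rw [mem_commonNeighbours] at hk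
    simp only [Finset.mem_union, Finset.mem_insert, Finset.mem_singleton, hWmem]
    have h1 := hlt i k
    have h2 := hlt k i
    have h3 := hlt (i + 1) k
    have h4 := hlt k (i + 1)
    have h5 := hshort i k
    have h6 := hshort k (i + 1)
    grind
  have hcross := hE.card_crossing_le _ hmem
  have hmemcross : ∀ i k, 1 ≤ i → i < m → m < k → (i, k) ∈ E →
      (i, k) ∈ E.filter (Interleave (0, m)) := by
    intro i k h1 h2 h3 h4
    simp only [Finset.mem_filter, h4, Interleave, true_and]
    omega
  have hW2 : ∀ i, 1 ≤ i → i + 1 < m → 2 ≤ (W i).card := by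
    intro i hi him
    have h1 := (hK i (by omega)).trans
      ((Finset.card_le_card (hsub i hi him)).trans (Finset.card_union_le _ _))
    have h2 : ({i - 1, i + 2} : Finset ℕ).card ≤ 2 := Finset.card_le_two
    omega
  have hpair : ∀ i, (Finset.image (Prod.mk i) (W i)).card = (W i).card :=
    fun i => Finset.card_image_of_injective _ (Prod.mk_right_injective i)
  have hpair' : ∀ i, (Finset.image (Prod.mk (i + 1)) (W i)).card = (W i).card :=
    fun i => Finset.card_image_of_injective _ (Prod.mk_right_injective (i + 1))
  have hdisj : ∀ (i j : ℕ) (A B : Finset ℕ), i ≠ j →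
      Disjoint (A.image (Prod.mk i)) (B.image (Prod.mk j)) := by
    intro i j A B hij
    simp only [Finset.disjoint_left, Finset.mem_image]
    rintro _ ⟨a, -, rfl⟩ ⟨b, -, h⟩
    exact hij (Prod.mk.inj h).1.symm
  have h12 : (Finset.image (Prod.mk (1 : ℕ)) (W 1) ∪ Finset.image (Prod.mk (2 : ℕ)) (W 1)).card =
      (W 1).card + (W 1).card := by
    rw [Finset.card_union_of_disjoint (hdisj _ _ _ _ (by simp)), hpair, hpair' 1]
  have h12sub : Finset.image (Prod.mk (1 : ℕ)) (W 1) ∪ Finset.image (Prod.mk (2 : ℕ)) (W 1) ⊆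
      E.filter (Interleave (0, m)) := by
    simp only [Finset.union_subset_iff, Finset.image_subset_iff, hWmem]
    exact ⟨fun k hk => hmemcross 1 k le_rfl (by omega) hk.2.1 hk.2.2.1,
      fun k hk => hmemcross 2 k (by omega) (by omega) hk.2.1 hk.2.2.2⟩
  have hW1 := hW2 1 le_rfl (by omega)
  rcases Nat.lt_or_ge 3 m with hm' | hm'
  · have h3sub : Finset.image (Prod.mk (3 : ℕ)) (W 2) ⊆ E.filter (Interleave (0, m)) := by
      simp only [Finset.image_subset_iff, hWmem]
      exact fun k hk => hmemcross 3 k (by omega) (by omega) hk.2.1 hk.2.2.2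
    have h123 := Finset.card_le_card (Finset.union_subset h12sub h3sub)
    rw [Finset.card_union_of_disjoint, h12, hpair' 2] at h123
    · have := hW2 2 (by omega) (by omega)
      omega
    · exact Finset.disjoint_union_left.2
        ⟨hdisj _ _ _ _ (by simp), hdisj _ _ _ _ (by simp)⟩
  · obtain rfl : m = 3 := by omega
    have h1 := (Finset.card_le_card h12sub)
    obtain ⟨u, w, huw, hW⟩ := Finset.card_eq_two.1 (show (W 1).card = 2 by omega)
    have h2 := hsub 1 le_rfl (by omega)
    have h3 := Finset.eq_of_subset_of_card_le h2 <| (Finset.card_union_le _ _).trans <| by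
      have := hK 1 (by omega)
      have h2 : ({1 - 1, 1 + 2} : Finset ℕ).card ≤ 2 := Finset.card_le_two
      omega
    have h4 : 0 ∈ commonNeighbours n E 1 (1 + 1) := by simp [h3]
    have h5 : 3 ∈ commonNeighbours n E 1 (1 + 1) := by simp [h3]
    have h6 := (hWmem 1 u).1 (by simp [hW])
    have h7 := (hWmem 1 w).1 (by simp [hW])
    simp only [mem_commonNeighbours, Nat.reduceAdd] at h4 h5 h6 h7
    have h8 := hlt 2 0
    have h9 := hlt 3 1
    have e02 : (0, 2) ∈ E := h4.2.2.resolve_left fun h => by have := h8 h; omega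
    have e13 : (1, 3) ∈ E := h5.2.1.resolve_right fun h => by have := h9 h; omega
    rcases Nat.lt_or_gt_of_ne huw with h | h
    · exact HasQuadrilateral.false ⟨e02, hmem, e13, h6.2.2.1, h7.2.2.1, h6.2.2.2, h7.2.2.2⟩
        hE hcard hn hB h6.2.1 h
    · exact HasQuadrilateral.false ⟨e02, hmem, e13, h7.2.2.1, h6.2.2.1, h7.2.2.2, h6.2.2.2⟩
        hE hcard hn hB h7.2.1 h

theorem edgeBound_of_le_six (h3 : 3 ≤ n) (h6 : n ≤ 6) : EdgeBound n := by
  intro E hE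
  have h1 : E ⊆ (Finset.range n ×ˢ Finset.range n).filter fun e => e.1 < e.2 := by
    intro e he
    have := hE.lt e he
    have := hE.lt_size e he
    simp only [Finset.mem_filter, Finset.mem_product, Finset.mem_range]
    omega
  have h2 := Finset.card_le_card h1
  have h4 : ((Finset.range n ×ˢ Finset.range n).filter fun e => e.1 < e.2).card + 9 ≤ 4 * n := by
    interval_cases n <;> decide
  omega

theorem IsFivePlanar.exists_long (hE : IsFivePlanar n E) (hcard : 4 * n < E.card + 9)
    (hn : 7 ≤ n) : ∃ i j, (i, j) ∈ E ∧ i + 3 ≤ j ∧ j + 3 ≤ i + n := by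
  by_contra! h
  have h1 : E ⊆ (Finset.range n).image (fun i => (i, i + 1)) ∪
      (Finset.range n).image (fun i => (i, i + 2)) ∪ {(0, n - 2), (1, n - 1), (0, n - 1)} := by
    rintro ⟨a, b⟩ he
    have h1 := hE.lt _ he
    have h2 := hE.lt_size _ he
    have h3 := h a b he
    simp only [Finset.mem_union, Finset.mem_image, Finset.mem_range, Prod.mk.injEq,
      Finset.mem_insert, Finset.mem_singleton] at h1 h2 ⊢
    by_cases h4 : b = a + 1
    · exact Or.inl (Or.inl ⟨a, by omega, rfl, h4.symm⟩)
    by_cases h5 : b = a + 2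
    · exact Or.inl (Or.inr ⟨a, by omega, rfl, h5.symm⟩)
    right
    omega
  have h2 := (Finset.card_le_card h1).trans (Finset.card_union_le _ _)
  have h3 := Finset.card_union_le ((Finset.range n).image (fun i => (i, i + 1)))
    ((Finset.range n).image (fun i => (i, i + 2)))
  have h4 : ((Finset.range n).image (fun i => (i, i + 1))).card ≤ n := by
    simpa using Finset.card_image_le (s := Finset.range n) (f := fun i => (i, i + 1))
  have h5 : ((Finset.range n).image (fun i => (i, i + 2))).card ≤ n := by
    simpa using Finset.card_image_le (s := Finset.range n) (f := fun i => (i, i + 2))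
  have h6 : ({(0, n - 2), (1, n - 1), (0, n - 1)} : Finset (ℕ × ℕ)).card ≤ 3 :=
    Finset.card_le_three
  omega

theorem edgeBound (n : ℕ) (hn : 3 ≤ n) : EdgeBound n := by
  induction n using Nat.strong_induction_on with
  | _ n ih =>
    rcases Nat.lt_or_ge 6 n with h6 | h6
    swap
    · exact edgeBound_of_le_six hn h6
    intro E₀ hE₀
    by_contra! hcard₀
    let P : ℕ → Prop := fun m => 3 ≤ m ∧ m + 3 ≤ n ∧
      ∃ E, IsFivePlanar n E ∧ E.card = E₀.card ∧ (0, m) ∈ E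
    have hP : ∃ m, P m := by
      obtain ⟨i, j, h1, h2, h3⟩ := hE₀.exists_long hcard₀ h6
      exact ⟨j - i, by omega, by omega, hE₀.exists_mem_zero h1⟩
    classical
    obtain ⟨hm, hmn, E, hE, hc, hmem⟩ := Nat.find_spec hP
    refine hE.false_of_shortest (hc ▸ hcard₀) h6 (fun n' h3 hn' => ih n' hn' h3) hm hmn hmem ?_
    intro i j hij h3 hjm
    obtain ⟨E', hE', hc', hmem'⟩ := hE.exists_mem_zero hij
    have := Nat.find_min' hP (m := j - i)
      ⟨by omega, by omega, E', hE', hc'.trans hc, hmem'⟩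
    omega

end Bound

section Sym2Edges

variable {n : ℕ}

/-- The endpoints of an edge in increasing order. -/
def endpoints (e : Sym2 (Fin n)) : ℕ × ℕ := (e.inf.val, e.sup.val)

theorem endpoints_mk {a b : Fin n} (h : a < b) : endpoints s(a, b) = (a.val, b.val) := by
  simp [endpoints, h.le]

theorem endpoints_injective : Function.Injective (endpoints (n := n)) := by
  intro e f h
  rw [endpoints, endpoints, Prod.mk.injEq] at h
  exact Sym2.inf_eq_inf_and_sup_eq_sup.1 ⟨Fin.ext h.1, Fin.ext h.2⟩

theorem SimpleGraph.exists_lt_of_mem_edgeSet {G : SimpleGraph (Fin n)} {e : Sym2 (Fin n)}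
    (he : e ∈ G.edgeSet) : ∃ a b : Fin n, a < b ∧ e = s(a, b) := by
  induction e with
  | _ a b =>
    rcases lt_or_gt_of_ne (G.ne_of_adj (G.mem_edgeSet.1 he)) with h | h
    · exact ⟨a, b, h, rfl⟩
    · exact ⟨b, a, h, Sym2.eq_swap⟩

theorem cycBtw_iff {a b : Fin n} (h : a < b) (x : Fin n) : cycBtw n a b x ↔ a < x ∧ x < b := by
  have hb : (b.val + n - a.val) % n = b.val - a.val := by
    rw [show b.val + n - a.val = b.val - a.val + n by omega, Nat.add_mod_right,
      Nat.mod_eq_of_lt (by omega)]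
  rw [cycBtw, hb, Fin.lt_def, Fin.lt_def]
  rcases Nat.lt_or_ge x.val a.val with hx | hx
  · rw [Nat.mod_eq_of_lt (by omega)]
    omega
  · rw [show x.val + n - a.val = x.val - a.val + n by omega, Nat.add_mod_right,
      Nat.mod_eq_of_lt (by omega)]
    omega

theorem crossing_of_interleave {a b c d : Fin n} (hab : a < b) (hcd : c < d)
    (h : Interleave (a.val, b.val) (c.val, d.val)) : crossing n id s(a, b) s(c, d) := by
  refine ⟨a, b, c, d, rfl, rfl, hab.ne, hcd.ne, ?_⟩
  simp only [id, cycBtw_iff hab, ne_eq, Fin.ext_iff, Fin.lt_def, Interleave] at h ⊢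
  omega

theorem Fin.val_add_one_mod (x : Fin n) :
    (x.val + 1) % n = if x.val + 1 = n then 0 else x.val + 1 := by
  split_ifs with hx
  · rw [hx, Nat.mod_self]
  · exact Nat.mod_eq_of_lt (by omega)

theorem isChord_mk {a b : Fin n} (hab : a.val + 1 < b.val) (h : b.val + 1 < n + a.val) :
    IsChord n s(a, b) := by
  rintro x y hxy
  rw [cycConsecutive, Fin.val_add_one_mod, Fin.val_add_one_mod]
  rcases Sym2.eq_iff.1 hxy with ⟨rfl, rfl⟩ | ⟨rfl, rfl⟩ <;> split_ifs <;> omega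

open Classical in
theorem isFivePlanar_image_endpoints (G : SimpleGraph (Fin n))
    (hchords : ∀ e ∈ ({e ∈ G.edgeSet | IsChord n e} : Set (Sym2 (Fin n))),
      ({f ∈ G.edgeSet | IsChord n f ∧ crossing n id e f}).ncard ≤ 5) :
    IsFivePlanar n (G.edgeFinset.image endpoints) := by
  refine ⟨?_, ?_, ?_⟩ <;> simp only [Finset.forall_mem_image, SimpleGraph.mem_edgeFinset] <;>
    intro e he <;> obtain ⟨a, b, hab, rfl⟩ := G.exists_lt_of_mem_edgeSet he <;>
    rw [endpoints_mk hab]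
  · exact hab
  · exact b.isLt
  by_cases hc : a.val + 1 < b.val ∧ b.val + 1 < n + a.val
  · have h5 := hchords s(a, b) ⟨he, isChord_mk hc.1 hc.2⟩
    rw [Set.ncard_eq_toFinset_card'] at h5
    rw [Finset.filter_image]
    refine (Finset.card_image_le.trans (Finset.card_le_card ?_)).trans h5
    intro f hf
    simp only [Finset.mem_filter, SimpleGraph.mem_edgeFinset, Set.mem_toFinset,
      Set.mem_ofPred_eq] at hf ⊢
    obtain ⟨hfG, hf⟩ := hf
    obtain ⟨c, d, hcd, rfl⟩ := G.exists_lt_of_mem_edgeSet hfG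
    rw [endpoints_mk hcd] at hf
    refine ⟨hfG, isChord_mk ?_ ?_, crossing_of_interleave hab hcd hf⟩ <;>
      simp only [Interleave] at hf <;> omega
  · rw [Finset.filter_eq_empty_iff.2, Finset.card_empty]
    · omega
    simp only [Finset.forall_mem_image, SimpleGraph.mem_edgeFinset]
    intro f hf
    obtain ⟨c, d, hcd, rfl⟩ := G.exists_lt_of_mem_edgeSet hf
    rw [endpoints_mk hcd]
    simp only [Interleave]
    omega

open Classical in
theorem ncard_chords_add_le (hn : 3 ≤ n) (G : SimpleGraph (Fin n)) {s : Fin n → Fin n}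
    (hs : ∀ i, (s i).val = (i.val + 1) % n) (hboundary : ∀ i, G.Adj i (s i)) :
    ({e ∈ G.edgeSet | IsChord n e} : Set (Sym2 (Fin n))).ncard + n ≤ G.edgeFinset.card := by
  let g : Fin n → Sym2 (Fin n) := fun i => s(i, s i)
  have hg : Function.Injective g := by
    intro i j hij
    rcases Sym2.eq_iff.1 hij with ⟨h, -⟩ | ⟨h1, h2⟩
    · exact h
    · simp only [Fin.ext_iff, hs, Fin.val_add_one_mod] at h1 h2
      split_ifs at h1 h2 <;> omega
  have hcard : (Finset.univ.image g).card = n := by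
    rw [Finset.card_image_of_injective _ hg, Finset.card_univ, Fintype.card_fin]
  rw [Set.ncard_eq_toFinset_card']
  refine (congrArg _ hcard.symm).trans_le ?_
  rw [← Finset.card_union_of_disjoint]
  · refine Finset.card_le_card (Finset.union_subset ?_ ?_)
    · intro e he
      exact SimpleGraph.mem_edgeFinset.2 (Set.mem_toFinset.1 he).1
    · simpa [Finset.image_subset_iff, g] using hboundary
  · simp only [Finset.disjoint_left, Set.mem_toFinset, Finset.mem_image]
    rintro _ he ⟨i, -, rfl⟩
    exact he.2 _ _ rfl (Or.inl (hs i))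

end Sym2Edges

/-- Let `G` be a graph on `n ≥ 3` vertices in a cyclic order whose edges comprise
all `n` boundary edges (between consecutive vertices) together with the set `C` of
its chords.  If every chord of `G` is crossed by at most `5` other chords, then
`G` has at most `3n - 9` chords. -/
theorem chords_per_face (n : ℕ) (hn : 3 ≤ n) (G : SimpleGraph (Fin n))
    (hboundary : ∀ i : Fin n, G.Adj i ⟨(i.val + 1) % n, Nat.mod_lt _ (by omega)⟩)
    (hchords : ∀ e ∈ ({e ∈ G.edgeSet | IsChord n e} : Set (Sym2 (Fin n))),
      ({f ∈ G.edgeSet | IsChord n f ∧ crossing n id e f}).ncard ≤ 5) :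
    ({e ∈ G.edgeSet | IsChord n e} : Set (Sym2 (Fin n))).ncard ≤ 3 * n - 9 := by
  classical
  have h1 := edgeBound n hn _ (isFivePlanar_image_endpoints G hchords)
  rw [Finset.card_image_of_injective _ endpoints_injective] at h1
  have h2 := ncard_chords_add_le hn G (fun _ => rfl) hboundary
  omega
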